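/- Let S be an abelian subgroup of the Pauli group G_d^n with no nontrivial scalars and with Nat.card S = d^n. Then, up to phase, S is a maximal abelian set of Pauli operators: every P ∈ G_d^n that commutes with every element of S can be written as P = q^k • s for some k ∈ ZMod d and some s ∈ S. -/

import Mathlib

open Matrix

noncomputable def q (d : ℕ) : ℂ := Complex.exp (2 * Real.pi * Complex.I / d)

/-- Dot product of two vectors over `ZMod d`. -/
def dotp {n d : ℕ} (A B : Fin n → ZMod d) : ZMod d := ∑ i, A i * B i

/-- The Pauli word `W(U,V)` with entries `q^{⟨U,J⟩}` at `(J, K)` when `J = K + V`. -/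
noncomputable def PauliWord (d n : ℕ) (U V : Fin n → ZMod d) :
    Matrix (Fin n → ZMod d) (Fin n → ZMod d) ℂ :=
  Matrix.of fun J K => if J = K + V then q d ^ (dotp U J).val else 0

/-- The n-qudit Pauli group, as a set of matrices. -/
noncomputable def PauliSet (d n : ℕ) : Set (Matrix (Fin n → ZMod d) (Fin n → ZMod d) ℂ) :=
  {g | ∃ (k : ZMod d) (U V : Fin n → ZMod d), g = q d ^ k.val • PauliWord d n U V}

/-!
A Pauli operator with nonzero trace is a phase, so every element of `S` other than `1` is
traceless. The average of `S` projects onto the joint fixed space of `S` and has trace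
`d ^ n / |S| = 1`; hence `S` fixes a unique line. An invertible `P` commuting with `S` acts on this
line by a nonzero scalar, which is the trace of `P` times the average. So `P * s` has nonzero trace
for some `s ∈ S`, and being a Pauli operator it is a phase.
-/

section Averaging

open Module Representation

lemma exists_mul_eq_smul_of_isProj {K V : Type*} [Field K] [AddCommGroup V] [Module K V]
    {p : Submodule K V} (hp : finrank K p = 1) {e f : End K V} (he : LinearMap.IsProj p e)
    (hfe : Commute f e) : ∃ c : K, f * e = c • e := by
  obtain ⟨v, -, hspan⟩ := finrank_eq_one_iff'.mp hp
  have hfv : e (f v) = f v := by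
    rw [← Module.End.mul_apply, ← hfe.eq, Module.End.mul_apply, he.map_id v v.2]
  obtain ⟨c, hc⟩ := hspan ⟨f v, hfv ▸ he.map_mem (f v)⟩
  have hcv : f v = c • (v : V) := congrArg Subtype.val hc.symm
  refine ⟨c, LinearMap.ext fun x ↦ ?_⟩
  obtain ⟨a, ha⟩ := hspan ⟨e x, he.map_mem x⟩
  have hav : e x = a • (v : V) := congrArg Subtype.val ha.symm
  rw [Module.End.mul_apply, LinearMap.smul_apply, hav, map_smul, hcv, smul_comm]

section CommRing

variable {R V G : Type*} [CommRing R] [AddCommGroup V] [Module R V] [Group G] [Fintype G]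
  [Invertible (Fintype.card G : R)] {ρ : Representation R G V}

lemma averageMap_eq_smul_sum : ρ.averageMap = ⅟(Fintype.card G : R) • ∑ g, ρ g := by
  simp [GroupAlgebra.average]

lemma commute_averageMap {f : End R V} (hf : ∀ g, Commute f (ρ g)) :
    Commute f ρ.averageMap := by
  rw [averageMap_eq_smul_sum]
  exact (Commute.sum_right _ _ _ fun g _ ↦ hf g).smul_right _

lemma trace_averageMap_eq_one [Module.Free R V] [Module.Finite R V]
    (htrace : ∀ g ≠ 1, LinearMap.trace R V (ρ g) = 0)
    (hcard : finrank R V = Fintype.card G) : LinearMap.trace R V ρ.averageMap = 1 := by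
  rw [averageMap_eq_smul_sum, map_smul, map_sum, Fintype.sum_eq_single 1 htrace, map_one,
    LinearMap.trace_one, hcard, smul_eq_mul, invOf_mul_self]

end CommRing

section Field

variable {K V G : Type*} [Field K] [CharZero K] [AddCommGroup V] [Module K V]
  [FiniteDimensional K V] [Group G] {ρ : Representation K G V}

lemma finrank_invariants_eq_one [Fintype G] [Invertible (Fintype.card G : K)]
    (htrace : ∀ g ≠ 1, LinearMap.trace K V (ρ g) = 0)
    (hcard : finrank K V = Fintype.card G) : finrank K ρ.invariants = 1 := by
  rw [← Nat.cast_inj (R := K), ← ρ.isProj_averageMap.trace, trace_averageMap_eq_one htrace hcard,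
    Nat.cast_one]

theorem exists_trace_mul_ne_zero_of_commute [Finite G]
    (htrace : ∀ g ≠ 1, LinearMap.trace K V (ρ g) = 0) (hcard : finrank K V = Nat.card G)
    {f : End K V} (hunit : IsUnit f) (hcomm : ∀ g, Commute f (ρ g)) :
    ∃ g, LinearMap.trace K V (f * ρ g) ≠ 0 := by
  have := Fintype.ofFinite G
  have : Invertible (Fintype.card G : K) := invertibleOfNonzero (by simp)
  rw [Nat.card_eq_fintype_card] at hcard
  have htr : LinearMap.trace K V ρ.averageMap = 1 := trace_averageMap_eq_one htrace hcard
  obtain ⟨c, hc⟩ := exists_mul_eq_smul_of_isProj (finrank_invariants_eq_one htrace hcard)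
    ρ.isProj_averageMap (commute_averageMap hcomm)
  have hc0 : c ≠ 0 := by
    rintro rfl
    rw [zero_smul, hunit.mul_right_eq_zero] at hc
    rw [hc, map_zero] at htr
    exact zero_ne_one htr
  by_contra! hzero
  have hfe : LinearMap.trace K V (f * ρ.averageMap) = 0 := by
    rw [averageMap_eq_smul_sum, mul_smul_comm, Finset.mul_sum, map_smul, map_sum,
      Finset.sum_eq_zero fun g _ ↦ hzero g, smul_zero]
  rw [hc, map_smul, htr, smul_eq_mul, mul_one] at hfe
  exact hc0 hfe

end Field

end Averaging

theorem exists_mem_trace_mul_ne_zero_of_commute {K ι : Type*} [Field K] [CharZero K] [Fintype ι]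
    [DecidableEq ι] {M : Submonoid (Matrix ι ι K)} [Finite M]
    (hinv : ∀ B ∈ M, ∃ C ∈ M, B * C = 1)
    (hcard : Fintype.card ι = Nat.card M) (htrace : ∀ B ∈ M, B ≠ 1 → B.trace = 0)
    {A : Matrix ι ι K} (hA : IsUnit A) (hcomm : ∀ B ∈ M, Commute A B) :
    ∃ B ∈ M, (A * B).trace ≠ 0 := by
  let : Group M := groupOfIsUnit fun B ↦
    let ⟨C, hC, hBC⟩ := hinv B B.2
    .of_mul_eq_one ⟨C, hC⟩ (Subtype.ext hBC)
  let ρ : Representation K M (ι → K) := toLinAlgEquiv'.toAlgHom.toMonoidHom.comp M.subtype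
  have trace_toLin (B : Matrix ι ι K) : LinearMap.trace K _ (toLinAlgEquiv' B) = B.trace :=
    trace_toLin'_eq B
  obtain ⟨B, hB⟩ := exists_trace_mul_ne_zero_of_commute (ρ := ρ)
    (fun B hB ↦ (trace_toLin B).trans (htrace B B.2 (hB <| Subtype.ext ·)))
    ((Module.finrank_fintype_fun_eq_card K).trans hcard)
    (hA.map toLinAlgEquiv') (fun B ↦ (hcomm B B.2).map toLinAlgEquiv')
  exact ⟨B, B.2, by rwa [← trace_toLin, map_mul]⟩

section Pauli

variable {d n : ℕ} [NeZero d]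

lemma q_pow_val (a : ZMod d) : q d ^ a.val = ZMod.stdAddChar a := by
  rw [ZMod.stdAddChar_apply, ZMod.toCircle_apply, q, ← Complex.exp_nat_mul]
  congr 1
  ring

lemma sum_stdAddChar_dotProduct_eq_zero {ι : Type*} [Fintype ι] [DecidableEq ι] {U : ι → ZMod d}
    (hU : U ≠ 0) : ∑ J : ι → ZMod d, ZMod.stdAddChar (U ⬝ᵥ J) = 0 := by
  let ψ : AddChar (ι → ZMod d) ℂ :=
    ZMod.stdAddChar.compAddMonoidHom (dotProductBilin (ZMod d) (ZMod d) U).toAddMonoidHom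
  obtain ⟨i, hi⟩ := Function.ne_iff.mp hU
  have hψ : ψ ≠ 1 := by
    refine AddChar.ne_one_iff.mpr ⟨Pi.single i 1, fun h ↦ hi ?_⟩
    apply ZMod.injective_stdAddChar
    simpa [ψ] using h
  exact AddChar.sum_eq_zero_of_ne_one hψ

lemma pauliWord_apply (U V J K : Fin n → ZMod d) :
    PauliWord d n U V J K = if J = K + V then ZMod.stdAddChar (U ⬝ᵥ J) else 0 := by
  simp only [PauliWord, of_apply, q_pow_val]
  rfl

lemma pauliWord_zero_zero : PauliWord d n 0 0 = 1 := by
  ext J K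
  simp [pauliWord_apply, Matrix.one_apply]

lemma pauliWord_mul_pauliWord (U V U' V' : Fin n → ZMod d) :
    PauliWord d n U V * PauliWord d n U' V' =
      (ZMod.stdAddChar (-(U' ⬝ᵥ V)) : ℂ) • PauliWord d n (U + U') (V + V') := by
  ext J K
  have hsum : ∀ L ≠ J - V, PauliWord d n U V J L * PauliWord d n U' V' L K = 0 := by
    intro L hL
    rw [pauliWord_apply, if_neg fun h ↦ hL (eq_sub_of_add_eq h.symm), zero_mul]
  rw [mul_apply, Fintype.sum_eq_single _ hsum, Matrix.smul_apply, smul_eq_mul]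
  simp only [pauliWord_apply, sub_add_cancel, if_true, sub_eq_iff_eq_add, add_assoc, add_comm V']
  split_ifs
  · rw [← AddChar.map_add_eq_mul, ← AddChar.map_add_eq_mul, dotProduct_sub, add_dotProduct]
    congr 1
    ring
  · simp

lemma trace_pauliWord_eq_zero {U V : Fin n → ZMod d} (h : ¬(U = 0 ∧ V = 0)) :
    (PauliWord d n U V).trace = 0 := by
  by_cases hV : V = 0
  · simpa [trace, pauliWord_apply, hV] using
      sum_stdAddChar_dotProduct_eq_zero fun hU ↦ h ⟨hU, hV⟩
  · simp [trace, pauliWord_apply, hV]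

lemma smul_pauliWord_mul_smul_pauliWord (k l : ZMod d) (U V U' V' : Fin n → ZMod d) :
    (ZMod.stdAddChar k : ℂ) • PauliWord d n U V * (ZMod.stdAddChar l : ℂ) • PauliWord d n U' V' =
      (ZMod.stdAddChar (k + l - U' ⬝ᵥ V) : ℂ) • PauliWord d n (U + U') (V + V') := by
  rw [smul_mul_smul_comm, pauliWord_mul_pauliWord, smul_smul, sub_eq_add_neg,
    AddChar.map_add_eq_mul, AddChar.map_add_eq_mul]

variable {A B : Matrix (Fin n → ZMod d) (Fin n → ZMod d) ℂ}

lemma mem_pauliSet_iff : A ∈ PauliSet d n ↔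
    ∃ (k : ZMod d) (U V : Fin n → ZMod d), A = (ZMod.stdAddChar k : ℂ) • PauliWord d n U V := by
  simp only [PauliSet, Set.mem_ofPred_eq, q_pow_val]

lemma mul_mem_pauliSet (hA : A ∈ PauliSet d n) (hB : B ∈ PauliSet d n) :
    A * B ∈ PauliSet d n := by
  obtain ⟨k, U, V, rfl⟩ := mem_pauliSet_iff.mp hA
  obtain ⟨l, U', V', rfl⟩ := mem_pauliSet_iff.mp hB
  exact mem_pauliSet_iff.mpr ⟨_, _, _, smul_pauliWord_mul_smul_pauliWord k l U V U' V'⟩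

lemma isUnit_of_mem_pauliSet (hA : A ∈ PauliSet d n) : IsUnit A := by
  obtain ⟨k, U, V, rfl⟩ := mem_pauliSet_iff.mp hA
  refine .of_mul_eq_one
    ((ZMod.stdAddChar (-k - U ⬝ᵥ V) : ℂ) • PauliWord d n (-U) (-V)) ?_
  rw [smul_pauliWord_mul_smul_pauliWord, add_neg_cancel, add_neg_cancel, pauliWord_zero_zero,
    neg_dotProduct, sub_neg_eq_add, add_assoc, sub_add_cancel, add_neg_cancel,
    AddChar.map_zero_eq_one, one_smul]

lemma exists_eq_smul_one_of_trace_ne_zero (hA : A ∈ PauliSet d n) (htrace : A.trace ≠ 0) :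
    ∃ k : ZMod d, A = q d ^ k.val • 1 := by
  obtain ⟨k, U, V, rfl⟩ := hA
  have hUV : U = 0 ∧ V = 0 := by
    by_contra h
    exact htrace (by rw [trace_smul, trace_pauliWord_eq_zero h, smul_zero])
  exact ⟨k, by rw [hUV.1, hUV.2, pauliWord_zero_zero]⟩

end Pauli

theorem maximal_abelian_up_to_phase (d n : ℕ) [NeZero d] (hd : 2 ≤ d) (hn : 1 ≤ n)
    (S : Set (Matrix (Fin n → ZMod d) (Fin n → ZMod d) ℂ))
    (hSsub : S ⊆ PauliSet d n)
    (hS1 : (1 : Matrix (Fin n → ZMod d) (Fin n → ZMod d) ℂ) ∈ S)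
    (hSmul : ∀ a ∈ S, ∀ b ∈ S, a * b ∈ S)
    (hSinv : ∀ a ∈ S, ∃ b ∈ S, a * b = 1)
    (hScomm : ∀ a ∈ S, ∀ b ∈ S, a * b = b * a)
    (hSscal : ∀ c : ℂ, c • (1 : Matrix (Fin n → ZMod d) (Fin n → ZMod d) ℂ) ∈ S →
      c • (1 : Matrix (Fin n → ZMod d) (Fin n → ZMod d) ℂ) = 1)
    (hcard : Nat.card S = d ^ n) :
    ∀ P ∈ PauliSet d n, (∀ s ∈ S, P * s = s * P) →
      ∃ (k : ZMod d), ∃ s ∈ S, P = q d ^ k.val • s := by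
  intro P hP hPS
  let M : Submonoid (Matrix (Fin n → ZMod d) (Fin n → ZMod d) ℂ) :=
    { carrier := S, one_mem' := hS1, mul_mem' := fun ha hb ↦ hSmul _ ha _ hb }
  have : Finite M := Nat.finite_of_card_ne_zero (hcard.trans_ne (pow_ne_zero n (NeZero.ne d)))
  have htrace : ∀ s ∈ S, s ≠ 1 → s.trace = 0 := by
    intro s hs hs1
    by_contra h
    obtain ⟨k, rfl⟩ := exists_eq_smul_one_of_trace_ne_zero (hSsub hs) h
    exact hs1 (hSscal _ hs)
  have hdim : Fintype.card (Fin n → ZMod d) = Nat.card S := by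
    rw [hcard, Fintype.card_fun, ZMod.card, Fintype.card_fin]
  obtain ⟨s, hs, hPs⟩ := exists_mem_trace_mul_ne_zero_of_commute (M := M) hSinv hdim htrace
    (isUnit_of_mem_pauliSet hP) hPS
  obtain ⟨k, hk⟩ := exists_eq_smul_one_of_trace_ne_zero (mul_mem_pauliSet hP (hSsub hs)) hPs
  obtain ⟨t, ht, hst⟩ := hSinv s hs
  refine ⟨k, t, ht, ?_⟩
  calc P = P * s * t := by rw [mul_assoc, hst, mul_one]
    _ = q d ^ k.val • t := by rw [hk, smul_mul_assoc, one_mul]
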